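/- arXiv:2407.10659 — 2 statements merged into one kernel-verified Lean document; each statement's English description precedes it below -/
import Mathlib

section
/- Let T > 0 and let Z : ℝ → ℝ be such that the restriction of Z to [0, T] is continuously differentiable (C¹ on [0, T]). Then the variance ratio converges to 2: R_n(Z) → 2 as n → ∞. -/
open Filter

noncomputable section

/-- Extension of `Z : ℝ → ℝ` by the conventions `Z t := Z 0` for `t < 0` and
`Z t := Z T` for `t > T`. -/
def Zext (T : ℝ) (Z : ℝ → ℝ) (t : ℝ) : ℝ :=
  if t < 0 then Z 0 else if T < t then Z T else Z t

/-- Realized variance `RV^n_T(Z) = Σ_{i=1}^n (Z(iT/n) − Z((i−1)T/n))²`. -/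
def RV (T : ℝ) (Z : ℝ → ℝ) (n : ℕ) : ℝ :=
  ∑ i ∈ Finset.Icc 1 n,
    (Zext T Z ((i : ℝ) * T / (n : ℝ)) - Zext T Z (((i : ℝ) - 1) * T / (n : ℝ))) ^ 2

/-- Coarse realized variance
`RV^{n,2}_T(Z) = (1/2) Σ_{i=0}^n (Z((i+1)T/n) − Z((i−1)T/n))²`. -/
def RV2 (T : ℝ) (Z : ℝ → ℝ) (n : ℕ) : ℝ :=
  (1 / 2) * ∑ i ∈ Finset.range (n + 1),
    (Zext T Z (((i : ℝ) + 1) * T / (n : ℝ)) - Zext T Z (((i : ℝ) - 1) * T / (n : ℝ))) ^ 2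

/-- The first-order autocovariance sum
`Σ_{i=1}^{n−1} (Z((i+1)T/n) − Z(iT/n))·(Z(iT/n) − Z((i−1)T/n))`. -/
def crossSum (T : ℝ) (Z : ℝ → ℝ) (n : ℕ) : ℝ :=
  ∑ i ∈ Finset.Icc 1 (n - 1),
    (Zext T Z (((i : ℝ) + 1) * T / (n : ℝ)) - Zext T Z ((i : ℝ) * T / (n : ℝ))) *
      (Zext T Z ((i : ℝ) * T / (n : ℝ)) - Zext T Z (((i : ℝ) - 1) * T / (n : ℝ)))

/-- Variance ratio `R_n(Z) = RV^{n,2}_T(Z)/RV^n_T(Z)`, with the convention `0/0 := 2`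
(note that `RV^n_T(Z) = 0` forces `RV^{n,2}_T(Z) = 0`). -/
def Rratio (T : ℝ) (Z : ℝ → ℝ) (n : ℕ) : ℝ :=
  if RV T Z n = 0 then 2 else RV2 T Z n / RV T Z n

/-- First-order sample autocorrelation `ρ_n(Z)` with the convention `0/0 := 1`
(note that `RV^n_T(Z) = 0` forces the numerator to vanish). -/
def acf (T : ℝ) (Z : ℝ → ℝ) (n : ℕ) : ℝ :=
  if RV T Z n = 0 then 1 else crossSum T Z n / RV T Z n

/-!
Write `Δ i` for the increment of `Z` over the `i`-th grid cell. Extending `Z` by constants makes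
`Δ 0 = Δ (n + 1) = 0`, so the parallelogram law turns `2 RV - RV2` into half of
`Q n := ∑ i ≤ n, (Δ (i + 1) - Δ i) ^ 2`, that is, `|R_n - 2| = Q n / (2 RV)`. A `C¹` function has
second differences `o(T / n)`, uniformly on the grid, and increments `O(T / n)`, the latter being
needed only for the two boundary terms; hence `n * Q n → 0`. If `Z` is not constant on `[0, T]`, say
`Z s ≠ Z 0`, then Cauchy–Schwarz applied to the increments between `0` and `s` keeps `n * RV`
bounded away from `0`.
-/

section SecondDifference

variable {E F : Type*} [NormedAddCommGroup E] [NormedSpace ℝ E] [NormedAddCommGroup F]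
  [NormedSpace ℝ F] {f : E → F} {s : Set E}

lemma norm_second_difference_le_of_norm_fderivWithin_sub_le (hs : Convex ℝ s)
    (hf : DifferentiableOn ℝ f s) {C : ℝ} {x h : E}
    (bound : ∀ y ∈ s, y + h ∈ s → ‖fderivWithin ℝ f s (y + h) - fderivWithin ℝ f s y‖ ≤ C)
    (hsub : x - h ∈ s) (hadd : x + h ∈ s) :
    ‖(f (x + h) - f x) - (f x - f (x - h))‖ ≤ C * ‖h‖ := by
  have hx : x ∈ s := by simpa only [midpoint_sub_add] using hs.midpoint_mem hsub hadd
  have hderiv : ∀ y ∈ s ∩ (· + h) ⁻¹' s, HasFDerivWithinAt (fun y ↦ f (y + h) - f y)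
      (fderivWithin ℝ f s (y + h) - fderivWithin ℝ f s y) (s ∩ (· + h) ⁻¹' s) y := by
    rintro y ⟨hy, hyh⟩
    have hshift : HasFDerivWithinAt (fun y ↦ f (y + h)) (fderivWithin ℝ f s (y + h))
        (s ∩ (· + h) ⁻¹' s) y :=
      (hf (y + h) hyh).hasFDerivWithinAt.comp y ((hasFDerivWithinAt_id y _).add_const h)
        fun _ hz ↦ hz.2
    exact hshift.sub ((hf y hy).hasFDerivWithinAt.mono Set.inter_subset_left)
  have hconvex : Convex ℝ (s ∩ (· + h) ⁻¹' s) := hs.inter (hs.translate_preimage_left h)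
  simpa only [sub_add_cancel, sub_sub_cancel] using
    hconvex.norm_image_sub_le_of_norm_hasFDerivWithin_le hderiv (fun y hy ↦ bound y hy.1 hy.2)
      ⟨hsub, by simpa using hx⟩ ⟨hx, hadd⟩

lemma exists_norm_second_difference_le_of_contDiffOn (hs : Convex ℝ s) (hs' : IsCompact s)
    (hu : UniqueDiffOn ℝ s) (hf : ContDiffOn ℝ 1 f s) {ε : ℝ} (hε : 0 < ε) :
    ∃ δ > 0, ∀ x h : E, ‖h‖ < δ → x - h ∈ s → x + h ∈ s →
      ‖(f (x + h) - f x) - (f x - f (x - h))‖ ≤ ε * ‖h‖ := by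
  have hunif : UniformContinuousOn (fderivWithin ℝ f s) s :=
    hs'.uniformContinuousOn_of_continuous (hf.continuousOn_fderivWithin hu le_rfl)
  obtain ⟨δ, hδ, hclose⟩ := Metric.uniformContinuousOn_iff_le.mp hunif ε hε
  refine ⟨δ, hδ, fun x h hh hsub hadd ↦ ?_⟩
  refine norm_second_difference_le_of_norm_fderivWithin_sub_le hs
    (hf.differentiableOn one_ne_zero) (fun y hy hyh ↦ ?_) hsub hadd
  rw [← dist_eq_norm]
  exact hclose (y + h) hyh y hy (by simpa using hh.le)

end SecondDifference

section FiniteSums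

lemma sum_Icc_one_eq_sum_range {M : Type*} [AddCommMonoid M] (g : ℕ → M) (n : ℕ) :
    ∑ i ∈ Finset.Icc 1 n, g i = ∑ i ∈ Finset.range n, g (i + 1) := by
  rw [Finset.range_eq_Ico, Finset.sum_Ico_add' g 0 n 1]
  rfl

lemma sum_range_sq_add_add_sum_range_sq_sub {R : Type*} [CommRing R] {d : ℕ → R} {n : ℕ}
    (hzero : d 0 = 0) (hlast : d (n + 1) = 0) :
    ∑ i ∈ Finset.range (n + 1), (d (i + 1) + d i) ^ 2 +
        ∑ i ∈ Finset.range (n + 1), (d (i + 1) - d i) ^ 2 =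
      4 * ∑ i ∈ Finset.Icc 1 n, d i ^ 2 := by
  have hsucc : ∑ i ∈ Finset.range (n + 1), d (i + 1) ^ 2 = ∑ i ∈ Finset.Icc 1 n, d i ^ 2 := by
    simp [Finset.sum_range_succ, hlast, sum_Icc_one_eq_sum_range]
  have hself : ∑ i ∈ Finset.range (n + 1), d i ^ 2 = ∑ i ∈ Finset.Icc 1 n, d i ^ 2 := by
    simp [Finset.sum_range_succ', hzero, sum_Icc_one_eq_sum_range]
  calc
    _ = 2 * ∑ i ∈ Finset.range (n + 1), d (i + 1) ^ 2 +
          2 * ∑ i ∈ Finset.range (n + 1), d i ^ 2 := by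
      simp only [Finset.mul_sum, ← Finset.sum_add_distrib]
      exact Finset.sum_congr rfl fun i _ ↦ by ring
    _ = _ := by rw [hsucc, hself]; ring

variable {R : Type*} [CommRing R] [LinearOrder R] [IsStrictOrderedRing R]

lemma sum_range_sq_sub_le {d : ℕ → R} {n : ℕ} {A B : R} (hzero : d 0 = 0)
    (hlast : d (n + 1) = 0) (hA : ∀ i, |d i| ≤ A)
    (hB : ∀ i, 1 ≤ i → i < n → |d (i + 1) - d i| ≤ B) :
    ∑ i ∈ Finset.range (n + 1), (d (i + 1) - d i) ^ 2 ≤ n * B ^ 2 + 2 * A ^ 2 := by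
  have hAsq (i : ℕ) : d i ^ 2 ≤ A ^ 2 := sq_le_sq.mpr ((hA i).trans (le_abs_self A))
  cases n with
  | zero => simpa [hzero, hlast] using sq_nonneg A
  | succ m =>
    have hinterior : ∑ i ∈ Finset.range m, (d (i + 1 + 1) - d (i + 1)) ^ 2 ≤ m * B ^ 2 := by
      simpa using Finset.sum_le_card_nsmul (Finset.range m) _ (B ^ 2) fun i hi ↦
        sq_le_sq.mpr ((hB (i + 1) (by lia) (by simpa using hi)).trans (le_abs_self B))
    calc
      _ = ∑ i ∈ Finset.range m, (d (i + 1 + 1) - d (i + 1)) ^ 2 + d 1 ^ 2 + d (m + 1) ^ 2 := by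
        rw [Finset.sum_range_succ, Finset.sum_range_succ', hzero, hlast]
        ring
      _ ≤ m * B ^ 2 + A ^ 2 + A ^ 2 := add_le_add (add_le_add hinterior (hAsq 1)) (hAsq (m + 1))
      _ ≤ (m + 1 : ℕ) * B ^ 2 + 2 * A ^ 2 := by push_cast; linarith [sq_nonneg B]

lemma sq_sub_le_mul_sum_range_sq_sub (u : ℕ → R) {k n : ℕ} (hk : k ≤ n) :
    (u k - u 0) ^ 2 ≤ n * ∑ i ∈ Finset.range n, (u (i + 1) - u i) ^ 2 :=
  calc
    (u k - u 0) ^ 2 = (∑ i ∈ Finset.range k, (u (i + 1) - u i)) ^ 2 := by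
      rw [Finset.sum_range_sub]
    _ ≤ k * ∑ i ∈ Finset.range k, (u (i + 1) - u i) ^ 2 := by
      simpa using sq_sum_le_card_mul_sum_sq (s := Finset.range k) (f := fun i ↦ u (i + 1) - u i)
    _ ≤ n * ∑ i ∈ Finset.range n, (u (i + 1) - u i) ^ 2 := by gcongr

end FiniteSums

section ConstantExtension

variable {T : ℝ} {Z : ℝ → ℝ}

lemma Zext_eq_IccExtend (hT : 0 ≤ T) (Z : ℝ → ℝ) :
    Zext T Z = Set.IccExtend hT ((Set.Icc 0 T).domRestrict Z) := by
  funext t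
  rcases lt_or_ge t 0 with ht | ht
  · rw [Set.IccExtend_of_le_left _ _ ht.le, Zext, if_pos ht, Set.domRestrict_apply]
  rcases lt_or_ge T t with ht' | ht'
  · rw [Set.IccExtend_of_right_le _ _ ht'.le, Zext, if_neg ht.not_gt, if_pos ht',
      Set.domRestrict_apply]
  · rw [Set.IccExtend_of_mem _ _ ⟨ht, ht'⟩, Zext, if_neg ht.not_gt, if_neg ht'.not_gt,
      Set.domRestrict_apply]

lemma Zext_of_mem {t : ℝ} (ht : t ∈ Set.Icc 0 T) : Zext T Z t = Z t := by
  rw [Zext, if_neg ht.1.not_gt, if_neg ht.2.not_gt]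

lemma Zext_of_nonpos (hT : 0 ≤ T) {t : ℝ} (ht : t ≤ 0) : Zext T Z t = Z 0 := by
  rw [Zext_eq_IccExtend hT, Set.IccExtend_of_le_left _ _ ht, Set.domRestrict_apply]

lemma Zext_of_ge (hT : 0 ≤ T) {t : ℝ} (ht : T ≤ t) : Zext T Z t = Z T := by
  rw [Zext_eq_IccExtend hT, Set.IccExtend_of_right_le _ _ ht, Set.domRestrict_apply]

lemma continuous_Zext (hT : 0 ≤ T) (hZ : ContinuousOn Z (Set.Icc 0 T)) :
    Continuous (Zext T Z) := by
  rw [Zext_eq_IccExtend hT, continuous_IccExtend_iff]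
  exact hZ.domRestrict

lemma lipschitzWith_Zext (hT : 0 ≤ T) {K : NNReal} (hZ : LipschitzOnWith K Z (Set.Icc 0 T)) :
    LipschitzWith K (Zext T Z) := by
  rw [Zext_eq_IccExtend hT]
  simpa only [Set.IccExtend, mul_one] using hZ.to_restrict.comp (LipschitzWith.projIcc hT)

end ConstantExtension

/-- The increment `Δ i = Z(iT/n) − Z((i−1)T/n)` of the extended path over the `i`-th cell of the
grid of mesh `T/n`. The index is natural, so `Δ 0` is the increment to the left of `0`. -/
def gridIncrement (T : ℝ) (Z : ℝ → ℝ) (n i : ℕ) : ℝ :=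
  Zext T Z (i * T / n) - Zext T Z ((i - 1) * T / n)

/-- The sum `∑_{i=0}^n (Δ (i+1) − Δ i)²` of the squared second differences of the extended path;
it measures how far the variance ratio is from `2`. -/
def sumSqSecondDiff (T : ℝ) (Z : ℝ → ℝ) (n : ℕ) : ℝ :=
  ∑ i ∈ Finset.range (n + 1), (gridIncrement T Z n (i + 1) - gridIncrement T Z n i) ^ 2

section VarianceRatio

variable {T : ℝ} {Z : ℝ → ℝ} {n : ℕ}

lemma gridIncrement_succ (T : ℝ) (Z : ℝ → ℝ) (n i : ℕ) :
    gridIncrement T Z n (i + 1) = Zext T Z ((i + 1 : ℕ) * T / n) - Zext T Z (i * T / n) := by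
  simp only [gridIncrement, Nat.cast_add, Nat.cast_one, add_sub_cancel_right]

lemma gridIncrement_zero (hT : 0 ≤ T) (Z : ℝ → ℝ) (n : ℕ) : gridIncrement T Z n 0 = 0 := by
  have hleft : ((0 : ℕ) - 1) * T / n ≤ 0 := by
    rw [Nat.cast_zero, zero_sub, neg_one_mul, neg_div]
    exact neg_nonpos.mpr (by positivity)
  rw [gridIncrement, Zext_of_nonpos hT hleft, Zext_of_nonpos hT (by simp), sub_self]

lemma gridIncrement_add_one_self (hT : 0 ≤ T) (Z : ℝ → ℝ) (hn : n ≠ 0) :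
    gridIncrement T Z n (n + 1) = 0 := by
  have hlast : n * T / n = T := mul_div_cancel_left₀ T (Nat.cast_ne_zero.mpr hn)
  have hright : T ≤ (n + 1 : ℕ) * T / n := by
    calc T = n * T / n := hlast.symm
      _ ≤ (n + 1 : ℕ) * T / n := by gcongr; exact n.le_succ
  rw [gridIncrement_succ, Zext_of_ge hT hright, Zext_of_ge hT hlast.ge, sub_self]

lemma abs_gridIncrement_le (hT : 0 ≤ T) {K : NNReal} (hZ : LipschitzOnWith K Z (Set.Icc 0 T))
    (n i : ℕ) : |gridIncrement T Z n i| ≤ K * (T / n) := by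
  have hmesh : dist (i * T / n) ((i - 1) * T / n) = T / n := by
    rw [Real.dist_eq, ← sub_div, ← sub_mul, sub_sub_cancel, one_mul, abs_of_nonneg (by positivity)]
  simpa only [gridIncrement, hmesh, Real.dist_eq] using
    (lipschitzWith_Zext hT hZ).dist_le_mul (i * T / n) ((i - 1) * T / n)

lemma RV_eq_sum_range (T : ℝ) (Z : ℝ → ℝ) (n : ℕ) :
    RV T Z n = ∑ i ∈ Finset.range n,
      (Zext T Z ((i + 1 : ℕ) * T / n) - Zext T Z (i * T / n)) ^ 2 := by
  simp only [← gridIncrement_succ]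
  exact sum_Icc_one_eq_sum_range (fun i ↦ gridIncrement T Z n i ^ 2) n

lemma RV2_eq_sum_gridIncrement_add (T : ℝ) (Z : ℝ → ℝ) (n : ℕ) :
    RV2 T Z n = 1 / 2 *
      ∑ i ∈ Finset.range (n + 1), (gridIncrement T Z n (i + 1) + gridIncrement T Z n i) ^ 2 := by
  simp only [RV2, gridIncrement, Nat.cast_add, Nat.cast_one, add_sub_cancel_right,
    sub_add_sub_cancel]

lemma RV2_add_half_sumSqSecondDiff (hT : 0 ≤ T) (Z : ℝ → ℝ) (hn : n ≠ 0) :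
    RV2 T Z n + sumSqSecondDiff T Z n / 2 = 2 * RV T Z n := by
  have hparallelogram := sum_range_sq_add_add_sum_range_sq_sub (gridIncrement_zero hT Z n)
    (gridIncrement_add_one_self hT Z hn)
  have hRV : RV T Z n = ∑ i ∈ Finset.Icc 1 n, gridIncrement T Z n i ^ 2 := rfl
  rw [RV2_eq_sum_gridIncrement_add, sumSqSecondDiff, hRV]
  linarith

lemma sumSqSecondDiff_nonneg (T : ℝ) (Z : ℝ → ℝ) (n : ℕ) : 0 ≤ sumSqSecondDiff T Z n :=
  Finset.sum_nonneg fun _ _ ↦ sq_nonneg _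

lemma dist_Rratio_two (hT : 0 ≤ T) (hn : n ≠ 0) (hRV : 0 < RV T Z n) :
    dist (Rratio T Z n) 2 = sumSqSecondDiff T Z n / (2 * RV T Z n) := by
  have hdiff : Rratio T Z n - 2 = -(sumSqSecondDiff T Z n / (2 * RV T Z n)) := by
    rw [Rratio, if_neg hRV.ne',
      eq_sub_of_add_eq (RV2_add_half_sumSqSecondDiff hT Z hn)]
    field_simp
    ring
  rw [Real.dist_eq, hdiff, abs_neg,
    abs_of_nonneg (div_nonneg (sumSqSecondDiff_nonneg T Z n) (by positivity))]

lemma Rratio_eq_two_of_forall_eq (hT : 0 ≤ T) (hZ : ∀ s ∈ Set.Icc 0 T, Z s = Z 0) (n : ℕ) :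
    Rratio T Z n = 2 := by
  have hconst (t : ℝ) : Zext T Z t = Z 0 := by
    rw [Zext_eq_IccExtend hT]
    exact hZ _ (Set.projIcc 0 T hT t).2
  have hRV : RV T Z n = 0 := by simp [RV, hconst]
  rw [Rratio, if_pos hRV]

end VarianceRatio

section Asymptotics

variable {T : ℝ} {Z : ℝ → ℝ}

lemma eventually_abs_gridIncrement_sub_le (hT : 0 < T) (hZ : ContDiffOn ℝ 1 Z (Set.Icc 0 T))
    {ε : ℝ} (hε : 0 < ε) :
    ∀ᶠ n : ℕ in atTop, ∀ i, 1 ≤ i → i < n →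
      |gridIncrement T Z n (i + 1) - gridIncrement T Z n i| ≤ ε * (T / n) := by
  obtain ⟨δ, hδ, hbound⟩ := exists_norm_second_difference_le_of_contDiffOn (convex_Icc 0 T)
    isCompact_Icc (uniqueDiffOn_Icc hT) hZ hε
  filter_upwards [(tendsto_const_div_atTop_nhds_zero_nat T).eventually_lt_const hδ]
    with n hmesh i hi hin
  have hnorm : ‖T / n‖ = T / n := Real.norm_of_nonneg (by positivity)
  have hgrid {j : ℕ} (hj : j ≤ n) : j * T / n ∈ Set.Icc 0 T := by
    refine ⟨by positivity, div_le_of_le_mul₀ (by positivity) hT.le ?_⟩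
    rw [mul_comm]
    gcongr
  have hsucc : i * T / n + T / n = (i + 1 : ℕ) * T / n := by push_cast; ring
  have hpred : i * T / n - T / n = (i - 1 : ℕ) * T / n := by push_cast [hi]; ring
  have hsecond := hbound (i * T / n) (T / n) (hnorm.trans_lt hmesh)
    (hpred ▸ hgrid (by lia)) (hsucc ▸ hgrid (by lia))
  rw [hnorm, Real.norm_eq_abs, hsucc, hpred] at hsecond
  rw [gridIncrement_succ, gridIncrement, ← Nat.cast_pred hi, Zext_of_mem (hgrid hin),
    Zext_of_mem (hgrid hin.le), Zext_of_mem (hgrid (by lia))]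
  exact hsecond

lemma eventually_mul_sumSqSecondDiff_le (hT : 0 < T) (hZ : ContDiffOn ℝ 1 Z (Set.Icc 0 T))
    {K : NNReal} (hK : LipschitzOnWith K Z (Set.Icc 0 T)) {ε : ℝ} (hε : 0 < ε) :
    ∀ᶠ n : ℕ in atTop,
      n * sumSqSecondDiff T Z n ≤ (ε * T) ^ 2 + 2 * (K * T) ^ 2 / n := by
  filter_upwards [eventually_abs_gridIncrement_sub_le hT hZ hε, eventually_ne_atTop 0]
    with n hsecond hn
  calc
    n * sumSqSecondDiff T Z n ≤ n * (n * (ε * (T / n)) ^ 2 + 2 * (K * (T / n)) ^ 2) := by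
      gcongr
      exact sum_range_sq_sub_le (gridIncrement_zero hT.le Z n)
        (gridIncrement_add_one_self hT.le Z hn) (abs_gridIncrement_le hT.le hK n) hsecond
    _ = (ε * T) ^ 2 + 2 * (K * T) ^ 2 / n := by field_simp

lemma tendsto_mul_sumSqSecondDiff (hT : 0 < T) (hZ : ContDiffOn ℝ 1 Z (Set.Icc 0 T)) :
    Tendsto (fun n : ℕ ↦ n * sumSqSecondDiff T Z n) atTop (nhds 0) := by
  obtain ⟨K, hK⟩ := hZ.exists_lipschitzOnWith one_ne_zero (convex_Icc 0 T) isCompact_Icc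
  refine Metric.tendsto_nhds.mpr fun η hη ↦ ?_
  have hε : (√(η / 2) / T * T) ^ 2 = η / 2 := by
    rw [div_mul_cancel₀ _ hT.ne', Real.sq_sqrt (by positivity)]
  have hboundary : ∀ᶠ n : ℕ in atTop, 2 * (K * T) ^ 2 / n < η / 2 :=
    (tendsto_const_div_atTop_nhds_zero_nat _).eventually_lt_const (half_pos hη)
  filter_upwards [eventually_mul_sumSqSecondDiff_le hT hZ hK (ε := √(η / 2) / T) (by positivity),
    hboundary] with n hle hlt
  rw [Real.dist_0_eq_abs, abs_of_nonneg (mul_nonneg n.cast_nonneg (sumSqSecondDiff_nonneg T Z n))]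
  linarith

lemma eventually_lt_mul_RV (hT : 0 < T) (hZ : ContinuousOn Z (Set.Icc 0 T)) {s c : ℝ}
    (hs : s ∈ Set.Icc 0 T) (hc : c < (Z s - Z 0) ^ 2) :
    ∀ᶠ n : ℕ in atTop, c < n * RV T Z n := by
  have hgrid : Tendsto (fun n : ℕ ↦ ⌊s / T * n⌋₊ * T / n) atTop (nhds s) := by
    have hfloor : Tendsto (fun n : ℕ ↦ (⌊s / T * n⌋₊ / n : ℝ)) atTop (nhds (s / T)) :=
      (tendsto_nat_floor_mul_div_atTop (div_nonneg hs.1 hT.le)).comp tendsto_natCast_atTop_atTop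
    simpa only [div_mul_cancel₀ _ hT.ne', div_mul_eq_mul_div] using hfloor.mul_const T
  have hlim : Tendsto (fun n : ℕ ↦ (Zext T Z (⌊s / T * n⌋₊ * T / n) - Z 0) ^ 2) atTop
      (nhds ((Z s - Z 0) ^ 2)) := by
    rw [← Zext_of_mem (Z := Z) hs]
    exact ((((continuous_Zext hT.le hZ).tendsto s).comp hgrid).sub_const (Z 0)).pow 2
  filter_upwards [hlim.eventually_const_lt hc] with n hn
  have hfloorLe : ⌊s / T * n⌋₊ ≤ n :=
    Nat.floor_le_of_le (mul_le_of_le_one_left n.cast_nonneg (div_le_one_of_le₀ hs.2 hT.le))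
  have hCauchySchwarz :=
    sq_sub_le_mul_sum_range_sq_sub (fun i : ℕ ↦ Zext T Z (i * T / n)) hfloorLe
  have hzero : Zext T Z ((0 : ℕ) * T / n) = Z 0 := Zext_of_nonpos hT.le (by simp)
  rw [← RV_eq_sum_range, hzero] at hCauchySchwarz
  exact hn.trans_le hCauchySchwarz

end Asymptotics

/-- if the restriction of `Z` to `[0, T]` is continuously differentiable,
then the variance ratio converges to `2`: `R_n(Z) → 2` as `n → ∞`. -/
theorem stmt3 (T : ℝ) (hT : 0 < T) (Z : ℝ → ℝ)
    (hZ : ContDiffOn ℝ 1 Z (Set.Icc 0 T)) :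
    Tendsto (fun n : ℕ => Rratio T Z n) atTop (nhds 2) := by
  by_cases hconst : ∀ s ∈ Set.Icc 0 T, Z s = Z 0
  · simp only [Rratio_eq_two_of_forall_eq hT.le hconst, tendsto_const_nhds]
  push Not at hconst
  obtain ⟨s, hs, hne⟩ := hconst
  obtain ⟨c, hc, hcs⟩ : ∃ c, 0 < c ∧ c < (Z s - Z 0) ^ 2 :=
    exists_between (sq_pos_of_ne_zero (sub_ne_zero.mpr hne))
  have hbound : Tendsto (fun n : ℕ ↦ n * sumSqSecondDiff T Z n / (2 * c)) atTop (nhds 0) := by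
    simpa only [zero_div] using (tendsto_mul_sumSqSecondDiff hT hZ).div_const (2 * c)
  rw [tendsto_iff_dist_tendsto_zero]
  refine squeeze_zero' (.of_forall fun _ ↦ dist_nonneg) ?_ hbound
  filter_upwards [eventually_lt_mul_RV hT hZ.continuousOn hs hcs, eventually_ne_atTop 0]
    with n hlt hn
  have hRV : 0 < RV T Z n := pos_of_mul_pos_right (hc.trans hlt) n.cast_nonneg
  calc
    dist (Rratio T Z n) 2 = n * sumSqSecondDiff T Z n / (2 * (n * RV T Z n)) := by
      rw [dist_Rratio_two hT.le hn hRV]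
      field_simp
    _ ≤ n * sumSqSecondDiff T Z n / (2 * c) := by
      have hnonneg := sumSqSecondDiff_nonneg T Z n
      gcongr

end
end

section
/- (Negativity of the limiting constant, last claim of Lemma 4.) For every κ ∈ [1, ∞) and every H ∈ (0, 1/2), the constant C_{κ,H} := K_H^{−2} · ∫_0^1 ∫_0^1 ∫_0^∞ [((v−w)/κ + r + 2)_+^{H−1/2} − ((v−w)/κ + r + 1)_+^{H−1/2}] · [r^{H−1/2} − (r−1)_+^{H−1/2}] dr dw dv is finite and strictly negative; equivalently, since K_H^{−2} > 0, the triple Lebesgue integral above is strictly negative. -/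
/-!
After multiplication by `K_H^{-2}`, the inner integral is the covariance of two unit increments of
fractional Brownian motion at lag `(v - w) / κ + 2 > 1`: the integral over `(0, ∞)` of `F * G`, with
`G x = x₊^{H-1/2} - (x-1)₊^{H-1/2}` and `F` the translate of `G` by the lag. Here `G` has integral
zero and changes sign exactly once, from positive to negative at `x = 1`, while `F` is strictly
increasing because `x ↦ x^{H-1/2}` is convex. Hence `∫ F * G = ∫ (F - F 1) * G`, whose integrand is
negative away from `1`. Finally `|F| ≤ v^{H-1/2}`, which is integrable for `H > -1/2`, so that the
negativity survives integration over `v` and `w`.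
-/

open MeasureTheory Set

noncomputable section

/-- The truncated power `x ↦ x₊^{H−1/2}`: equal to `x^{H−1/2}` (real power) for `x > 0`
and to `0` for `x ≤ 0`. -/
def pplus (H x : ℝ) : ℝ := if 0 < x then x ^ (H - 1 / 2) else 0

/-- The integral `I_H = ∫_0^∞ (s^{H−1/2} − (s−1)₊^{H−1/2})² ds`. -/
def IH (H : ℝ) : ℝ := ∫ s in Ioi (0 : ℝ), (pplus H s - pplus H (s - 1)) ^ 2

/-- The normalizing constant `K_H = Γ(H+1/2)/√(sin(πH)·Γ(2H+1))` of the fractional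
kernel. -/
def KH (H : ℝ) : ℝ :=
  Real.Gamma (H + 1 / 2) / Real.sqrt (Real.sin (Real.pi * H) * Real.Gamma (2 * H + 1))

open Filter Topology

section NegativeIntegral

variable {α : Type*} [MeasurableSpace α] {μ : Measure α}

lemma integral_neg_of_ae_neg {f : α → ℝ} (hμ : μ ≠ 0) (hfi : Integrable f μ)
    (hf : ∀ᵐ x ∂μ, f x < 0) : ∫ x, f x ∂μ < 0 := by
  have hsupp : (Function.support fun x ↦ -f x) =ᵐ[μ] univ :=
    eventuallyEq_univ.mpr (hf.mono fun x hx ↦ (neg_pos.mpr hx).ne')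
  have hpos : 0 < ∫ x, -f x ∂μ := by
    refine (integral_pos_iff_support_of_nonneg_ae
      (hf.mono fun x hx ↦ (neg_pos.mpr hx).le) hfi.neg).mpr ?_
    rw [measure_congr hsupp]
    exact Measure.measure_univ_pos.mpr hμ
  rwa [integral_neg, neg_pos] at hpos

lemma setIntegral_neg_of_neg {f : α → ℝ} {s : Set α} (hs : MeasurableSet s) (hμ : μ s ≠ 0)
    (hfi : IntegrableOn f s μ) (hf : ∀ x ∈ s, f x < 0) : ∫ x in s, f x ∂μ < 0 :=
  integral_neg_of_ae_neg (mt Measure.restrict_eq_zero.mp hμ) hfi (ae_restrict_of_forall_mem hs hf)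

lemma setIntegral_mul_neg_of_strictMonoOn_of_sign_change [LinearOrder α] [NullSingletonClass μ]
    {F G : α → ℝ} {s : Set α} {a : α} (hs : MeasurableSet s) (hμ : μ s ≠ 0) (ha : a ∈ s)
    (hF : StrictMonoOn F s) (hpos : ∀ x ∈ s, x < a → 0 < G x) (hneg : ∀ x ∈ s, a < x → G x < 0)
    (hFG : IntegrableOn (fun x ↦ F x * G x) s μ) (hG : IntegrableOn G s μ)
    (hG0 : ∫ x in s, G x ∂μ = 0) : ∫ x in s, F x * G x ∂μ < 0 := by
  have hcenter : ∫ x in s, F x * G x ∂μ = ∫ x in s, (F x * G x - F a * G x) ∂μ := by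
    rw [integral_sub hFG (hG.const_mul _), integral_const_mul, hG0, mul_zero, sub_zero]
  rw [hcenter]
  refine integral_neg_of_ae_neg (mt Measure.restrict_eq_zero.mp hμ) (hFG.sub (hG.const_mul _)) ?_
  filter_upwards [ae_restrict_mem hs, ae_restrict_of_ae (Measure.ae_ne μ a)] with x hx hxa
  rw [← sub_mul]
  rcases lt_or_gt_of_ne hxa with hlt | hgt
  · exact mul_neg_of_neg_of_pos (sub_neg.mpr (hF hx ha hlt)) (hpos x hx hlt)
  · exact mul_neg_of_pos_of_neg (sub_pos.mpr (hF ha hx hgt)) (hneg x hx hgt)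

end NegativeIntegral

section RpowIncrement

variable {p : ℝ}

lemma rpow_sub_rpow_sub_one_neg (hp : p < 0) {x : ℝ} (hx : 1 < x) : x ^ p - (x - 1) ^ p < 0 :=
  sub_neg.mpr (Real.rpow_lt_rpow_of_neg (by linarith) (by linarith) hp)

lemma hasDerivAt_rpow_sub_rpow_sub_one (p : ℝ) {x : ℝ} (hx : 1 < x) :
    HasDerivAt (fun y : ℝ ↦ y ^ p - (y - 1) ^ p) (p * (x ^ (p - 1) - (x - 1) ^ (p - 1))) x := by
  have hleft := (hasDerivAt_id x).rpow_const (p := p) (Or.inl (zero_lt_one.trans hx).ne')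
  have hright := ((hasDerivAt_id x).sub_const 1).rpow_const (p := p) (Or.inl (sub_pos.mpr hx).ne')
  refine (hleft.sub hright).congr_deriv ?_
  simp only [id]
  ring

lemma strictMonoOn_rpow_sub_rpow_sub_one (hp : p < 0) :
    StrictMonoOn (fun x : ℝ ↦ x ^ p - (x - 1) ^ p) (Ioi 1) := by
  refine strictMonoOn_of_deriv_pos (convex_Ioi 1)
    (fun x hx ↦ (hasDerivAt_rpow_sub_rpow_sub_one p hx).continuousAt.continuousWithinAt)
    fun x hx ↦ ?_
  rw [interior_Ioi] at hx
  rw [(hasDerivAt_rpow_sub_rpow_sub_one p hx).deriv]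
  exact mul_pos_of_neg_of_neg hp (rpow_sub_rpow_sub_one_neg (by linarith) hx)

lemma continuous_rpow_sub_rpow_sub_one (hp : 0 ≤ p) :
    Continuous fun x : ℝ ↦ x ^ p - (x - 1) ^ p :=
  (continuous_id.rpow_const fun _ ↦ Or.inr hp).sub
    ((continuous_id.sub continuous_const).rpow_const fun _ ↦ Or.inr hp)

lemma tendsto_rpow_sub_rpow_sub_one_atTop (hp0 : 0 ≤ p) (hp1 : p < 1) :
    Tendsto (fun x : ℝ ↦ x ^ p - (x - 1) ^ p) atTop (𝓝 0) := by
  have hlim : Tendsto (fun x : ℝ ↦ (x - 1) ^ (p - 1)) atTop (𝓝 0) := by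
    have hshift : Tendsto (fun x : ℝ ↦ x - 1) atTop atTop :=
      tendsto_atTop_add_const_right _ (-1) tendsto_id
    simpa only [neg_sub, Function.comp_def] using
      (tendsto_rpow_neg_atTop (sub_pos.mpr hp1)).comp hshift
  refine squeeze_zero' ?_ ?_ hlim <;> filter_upwards [eventually_gt_atTop 1] with x hx
  · exact sub_nonneg.mpr (Real.rpow_le_rpow (by linarith) (by linarith) hp0)
  · have hfactor : ∀ y : ℝ, 0 < y → y ^ p = y ^ (p - 1) * y := fun y hy ↦ by
      rw [← Real.rpow_add_one hy.ne', sub_add_cancel]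
    have hanti : x ^ (p - 1) ≤ (x - 1) ^ (p - 1) :=
      Real.rpow_le_rpow_of_nonpos (by linarith) (by linarith) (by linarith)
    rw [hfactor x (by linarith), hfactor (x - 1) (by linarith)]
    nlinarith

lemma hasDerivAt_rpow_sub_rpow_sub_one_div (hp : p + 1 ≠ 0) {x : ℝ} (hx : 1 < x) :
    HasDerivAt (fun y : ℝ ↦ (y ^ (p + 1) - (y - 1) ^ (p + 1)) / (p + 1))
      (x ^ p - (x - 1) ^ p) x := by
  refine ((hasDerivAt_rpow_sub_rpow_sub_one (p + 1) hx).div_const (p + 1)).congr_deriv ?_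
  rw [add_sub_cancel_right, mul_div_cancel_left₀ _ hp]

lemma integrableOn_Ioi_rpow_sub_rpow_sub_one (hp1 : -1 < p) (hp0 : p < 0) :
    IntegrableOn (fun x : ℝ ↦ x ^ p - (x - 1) ^ p) (Ioi 1) :=
  integrableOn_Ioi_deriv_of_nonpos
    ((continuous_rpow_sub_rpow_sub_one (by linarith)).div_const (p + 1)).continuousWithinAt
    (fun _ hx ↦ hasDerivAt_rpow_sub_rpow_sub_one_div (by linarith) hx)
    (fun _ hx ↦ (rpow_sub_rpow_sub_one_neg hp0 hx).le)
    ((tendsto_rpow_sub_rpow_sub_one_atTop (by linarith) (by linarith)).div_const (p + 1))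

lemma integral_Ioi_rpow_sub_rpow_sub_one (hp1 : -1 < p) (hp0 : p < 0) :
    ∫ x in Ioi (1 : ℝ), (x ^ p - (x - 1) ^ p) = -(1 / (p + 1)) := by
  have hp : p + 1 ≠ 0 := by linarith
  rw [integral_Ioi_of_hasDerivAt_of_tendsto
    ((continuous_rpow_sub_rpow_sub_one (by linarith)).div_const (p + 1)).continuousWithinAt
    (fun _ hx ↦ hasDerivAt_rpow_sub_rpow_sub_one_div hp hx)
    (integrableOn_Ioi_rpow_sub_rpow_sub_one hp1 hp0)
    ((tendsto_rpow_sub_rpow_sub_one_atTop (by linarith) (by linarith)).div_const (p + 1)),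
    sub_self, Real.one_rpow, Real.zero_rpow hp, sub_zero, zero_div, zero_sub]

lemma integrableOn_Ioc_zero_one_rpow (hp : -1 < p) : IntegrableOn (fun x : ℝ ↦ x ^ p) (Ioc 0 1) :=
  (intervalIntegrable_iff_integrableOn_Ioc_of_le zero_le_one).mp
    (intervalIntegral.intervalIntegrable_rpow' hp)

lemma integral_Ioc_zero_one_rpow (hp : -1 < p) : ∫ x in Ioc (0 : ℝ) 1, x ^ p = 1 / (p + 1) := by
  rw [← intervalIntegral.integral_of_le zero_le_one, integral_rpow (Or.inl hp), Real.one_rpow,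
    Real.zero_rpow (by linarith), sub_zero]

end RpowIncrement

/-- The unit increment `x₊^{H−1/2} − (x−1)₊^{H−1/2}` of the truncated power: the kernel that
represents an increment of fractional Brownian motion over a unit interval, with `x` the distance
back in time from the right end of the interval. -/
def pplusIncr (H x : ℝ) : ℝ := pplus H x - pplus H (x - 1)

/-- `K_H^2` times the covariance of two unit increments of fractional Brownian motion, the later
interval being the earlier one translated by the lag `ℓ`. The variable `r` is the distance back in
time from the right end of the earlier interval. -/
def incrementCov (H ℓ : ℝ) : ℝ := ∫ r in Ioi (0 : ℝ), pplusIncr H (ℓ + r) * pplusIncr H r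

section Kernel

variable {H x ℓ : ℝ}

lemma pplus_of_pos (hx : 0 < x) : pplus H x = x ^ (H - 1 / 2) := if_pos hx

lemma pplus_of_nonpos (hx : x ≤ 0) : pplus H x = 0 := if_neg hx.not_gt

@[fun_prop]
lemma measurable_pplus (H : ℝ) : Measurable (pplus H) :=
  Measurable.ite measurableSet_Ioi (by fun_prop) measurable_const

@[fun_prop]
lemma measurable_pplusIncr (H : ℝ) : Measurable (pplusIncr H) := by
  unfold pplusIncr
  fun_prop

lemma pplusIncr_of_mem_Ioc (hx : x ∈ Ioc 0 1) : pplusIncr H x = x ^ (H - 1 / 2) := by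
  rw [pplusIncr, pplus_of_pos hx.1, pplus_of_nonpos (sub_nonpos.mpr hx.2), sub_zero]

lemma pplusIncr_of_one_lt (hx : 1 < x) :
    pplusIncr H x = x ^ (H - 1 / 2) - (x - 1) ^ (H - 1 / 2) := by
  rw [pplusIncr, pplus_of_pos (zero_lt_one.trans hx), pplus_of_pos (sub_pos.mpr hx)]

lemma pplusIncr_pos (hx : x ∈ Ioc 0 1) : 0 < pplusIncr H x := by
  rw [pplusIncr_of_mem_Ioc hx]
  exact Real.rpow_pos_of_pos hx.1 _

lemma pplusIncr_neg (hH : H < 1 / 2) (hx : 1 < x) : pplusIncr H x < 0 := by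
  rw [pplusIncr_of_one_lt hx]
  exact rpow_sub_rpow_sub_one_neg (by linarith) hx

lemma strictMonoOn_pplusIncr (hH : H < 1 / 2) : StrictMonoOn (pplusIncr H) (Ioi 1) :=
  (strictMonoOn_rpow_sub_rpow_sub_one (by linarith)).congr fun _ hx ↦ (pplusIncr_of_one_lt hx).symm

lemma abs_pplusIncr_le (hH : H < 1 / 2) (hx : 1 < x) :
    |pplusIncr H x| ≤ (x - 1) ^ (H - 1 / 2) := by
  rw [abs_of_neg (pplusIncr_neg hH hx), pplusIncr_of_one_lt hx, neg_sub]
  exact sub_le_self _ (Real.rpow_nonneg (by linarith) _)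

lemma integrableOn_Ioc_pplusIncr (hH : -1 / 2 < H) : IntegrableOn (pplusIncr H) (Ioc 0 1) :=
  (integrableOn_Ioc_zero_one_rpow (by linarith)).congr_fun
    (fun _ hx ↦ (pplusIncr_of_mem_Ioc hx).symm) measurableSet_Ioc

lemma integrableOn_Ioi_one_pplusIncr (hH₀ : -1 / 2 < H) (hH : H < 1 / 2) :
    IntegrableOn (pplusIncr H) (Ioi 1) :=
  (integrableOn_Ioi_rpow_sub_rpow_sub_one (by linarith) (by linarith)).congr_fun
    (fun _ hx ↦ (pplusIncr_of_one_lt hx).symm) measurableSet_Ioi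

lemma integrableOn_Ioi_zero_pplusIncr (hH₀ : -1 / 2 < H) (hH : H < 1 / 2) :
    IntegrableOn (pplusIncr H) (Ioi 0) := by
  rw [← Ioc_union_Ioi_eq_Ioi zero_le_one]
  exact (integrableOn_Ioc_pplusIncr hH₀).union (integrableOn_Ioi_one_pplusIncr hH₀ hH)

lemma integral_Ioi_zero_pplusIncr (hH₀ : -1 / 2 < H) (hH : H < 1 / 2) :
    ∫ x in Ioi (0 : ℝ), pplusIncr H x = 0 := by
  rw [← Ioc_union_Ioi_eq_Ioi zero_le_one,
    setIntegral_union Ioc_disjoint_Ioi_same measurableSet_Ioi (integrableOn_Ioc_pplusIncr hH₀)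
      (integrableOn_Ioi_one_pplusIncr hH₀ hH),
    setIntegral_congr_fun measurableSet_Ioc fun _ hx ↦ pplusIncr_of_mem_Ioc hx,
    setIntegral_congr_fun measurableSet_Ioi fun _ hx ↦ pplusIncr_of_one_lt hx,
    integral_Ioc_zero_one_rpow (by linarith),
    integral_Ioi_rpow_sub_rpow_sub_one (by linarith) (by linarith), add_neg_cancel]

lemma abs_pplusIncr_add_le (hH : H < 1 / 2) (hℓ : 1 < ℓ) {r : ℝ} (hr : 0 < r) :
    |pplusIncr H (ℓ + r)| ≤ (ℓ - 1) ^ (H - 1 / 2) :=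
  (abs_pplusIncr_le hH (by linarith)).trans
    (Real.rpow_le_rpow_of_nonpos (by linarith) (by linarith) (by linarith))

lemma integrableOn_pplusIncr_add_mul (hH₀ : -1 / 2 < H) (hH : H < 1 / 2) (hℓ : 1 < ℓ) :
    IntegrableOn (fun r ↦ pplusIncr H (ℓ + r) * pplusIncr H r) (Ioi 0) :=
  Integrable.bdd_mul (integrableOn_Ioi_zero_pplusIncr hH₀ hH)
    (Measurable.aestronglyMeasurable (by fun_prop))
    (ae_restrict_of_forall_mem measurableSet_Ioi fun _ hr ↦ abs_pplusIncr_add_le hH hℓ hr)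

end Kernel

section Covariance

variable {H ℓ κ : ℝ}

lemma incrementCov_neg (hH₀ : -1 / 2 < H) (hH : H < 1 / 2) (hℓ : 1 < ℓ) :
    incrementCov H ℓ < 0 := by
  have hmono : StrictMonoOn (fun r ↦ pplusIncr H (ℓ + r)) (Ioi 0) := fun r hr s hs hrs ↦
    strictMonoOn_pplusIncr hH (hℓ.trans (lt_add_of_pos_right _ hr))
      (hℓ.trans (lt_add_of_pos_right _ hs)) (add_lt_add_right hrs ℓ)
  exact setIntegral_mul_neg_of_strictMonoOn_of_sign_change measurableSet_Ioi (by simp)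
    (mem_Ioi.mpr zero_lt_one) hmono (fun _ hr hr1 ↦ pplusIncr_pos ⟨hr, hr1.le⟩)
    (fun _ _ hr1 ↦ pplusIncr_neg hH hr1) (integrableOn_pplusIncr_add_mul hH₀ hH hℓ)
    (integrableOn_Ioi_zero_pplusIncr hH₀ hH) (integral_Ioi_zero_pplusIncr hH₀ hH)

lemma norm_incrementCov_le (hH₀ : -1 / 2 < H) (hH : H < 1 / 2) (hℓ : 1 < ℓ) :
    ‖incrementCov H ℓ‖ ≤ (ℓ - 1) ^ (H - 1 / 2) * ∫ r in Ioi (0 : ℝ), |pplusIncr H r| := by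
  rw [← integral_const_mul]
  refine norm_integral_le_of_norm_le ((integrableOn_Ioi_zero_pplusIncr hH₀ hH).abs.const_mul _)
    (ae_restrict_of_forall_mem measurableSet_Ioi fun r hr ↦ ?_)
  rw [Real.norm_eq_abs, abs_mul]
  exact mul_le_mul_of_nonneg_right (abs_pplusIncr_add_le hH hℓ hr) (abs_nonneg _)

@[fun_prop]
lemma measurable_incrementCov (H : ℝ) : Measurable (incrementCov H) := by
  have hkernel : StronglyMeasurable fun q : ℝ × ℝ ↦ pplusIncr H (q.1 + q.2) * pplusIncr H q.2 :=
    Measurable.stronglyMeasurable (by fun_prop)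
  exact hkernel.integral_prod_right.measurable

lemma le_sub_div_add_one (hκ : 1 ≤ κ) {v w : ℝ} (hv : v ≤ 1) (hw : w ≤ 1) :
    v ≤ (v - w) / κ + 1 := by
  have hκ₀ : 0 < κ := zero_lt_one.trans_le hκ
  rw [← sub_le_iff_le_add, le_div_iff₀ hκ₀]
  nlinarith

lemma integrableOn_incrementCov_sub_div (hH₀ : -1 / 2 < H) (hH : H < 1 / 2) (hκ : 1 ≤ κ) :
    IntegrableOn (fun q : ℝ × ℝ ↦ incrementCov H ((q.1 - q.2) / κ + 2))
      (Ioc 0 1 ×ˢ Ioc 0 1) (volume.prod volume) := by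
  have hdom : IntegrableOn (fun q : ℝ × ℝ ↦ q.1 ^ (H - 1 / 2) * ∫ r in Ioi (0 : ℝ), |pplusIncr H r|)
      (Ioc 0 1 ×ˢ Ioc 0 1) (volume.prod volume) := by
    rw [IntegrableOn, ← Measure.prod_restrict]
    exact ((integrableOn_Ioc_zero_one_rpow (by linarith)).comp_fst _).mul_const _
  refine hdom.mono' (Measurable.aestronglyMeasurable (by fun_prop))
    (ae_restrict_of_forall_mem (measurableSet_Ioc.prod measurableSet_Ioc) ?_)
  rintro ⟨v, w⟩ ⟨hv, hw⟩
  have hlag : v ≤ (v - w) / κ + 1 := le_sub_div_add_one hκ hv.2 hw.2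
  refine (norm_incrementCov_le hH₀ hH (by linarith [hv.1])).trans ?_
  refine mul_le_mul_of_nonneg_right ?_ (integral_nonneg fun _ ↦ abs_nonneg _)
  exact Real.rpow_le_rpow_of_nonpos hv.1 (by linarith) (by linarith)

end Covariance

theorem stmt11_general (κ H : ℝ) (hκ : 1 ≤ κ) (hH₀ : -1 / 2 < H) (hH : H < 1 / 2) :
    (∀ v ∈ Ioc (0 : ℝ) 1, ∀ w ∈ Ioc (0 : ℝ) 1,
      IntegrableOn
        (fun r => (pplus H ((v - w) / κ + r + 2) - pplus H ((v - w) / κ + r + 1)) *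
          (pplus H r - pplus H (r - 1))) (Ioi (0 : ℝ))) ∧
    (∫ v in Ioc (0 : ℝ) 1, ∫ w in Ioc (0 : ℝ) 1, ∫ r in Ioi (0 : ℝ),
      (pplus H ((v - w) / κ + r + 2) - pplus H ((v - w) / κ + r + 1)) *
        (pplus H r - pplus H (r - 1))) < 0 := by
  have hkernel : ∀ v w r : ℝ,
      (pplus H ((v - w) / κ + r + 2) - pplus H ((v - w) / κ + r + 1)) *
        (pplus H r - pplus H (r - 1)) =
      pplusIncr H ((v - w) / κ + 2 + r) * pplusIncr H r := fun v w r ↦ by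
    unfold pplusIncr
    ring_nf
  have hlag : ∀ v ∈ Ioc (0 : ℝ) 1, ∀ w ∈ Ioc (0 : ℝ) 1, 1 < (v - w) / κ + 2 := fun v hv w hw ↦ by
    linarith [le_sub_div_add_one hκ hv.2 hw.2, hv.1]
  simp only [hkernel]
  refine ⟨fun v hv w hw ↦ integrableOn_pplusIncr_add_mul hH₀ hH (hlag v hv w hw), ?_⟩
  change ∫ v in Ioc (0 : ℝ) 1, ∫ w in Ioc (0 : ℝ) 1, incrementCov H ((v - w) / κ + 2) < 0
  rw [← setIntegral_prod _ (integrableOn_incrementCov_sub_div hH₀ hH hκ)]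
  exact setIntegral_neg_of_neg (measurableSet_Ioc.prod measurableSet_Ioc) (by simp)
    (integrableOn_incrementCov_sub_div hH₀ hH hκ)
    fun q hq ↦ incrementCov_neg hH₀ hH (hlag q.1 hq.1 q.2 hq.2)

/-- negativity of the limiting constant, last claim of Lemma 4: for every
`κ ∈ [1, ∞)` and `H ∈ (0, 1/2)`, the constant
`C_{κ,H} = K_H^{−2}·∫_0^1∫_0^1∫_0^∞ [((v−w)/κ + r + 2)₊^{H−1/2} − ((v−w)/κ + r + 1)₊^{H−1/2}]
·[r^{H−1/2} − (r−1)₊^{H−1/2}] dr dw dv`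
is finite (the inner integrand is integrable on `(0, ∞)` for each `v, w`) and strictly
negative; equivalently (since `K_H^{−2} > 0`) the triple Lebesgue integral is strictly
negative. -/
theorem stmt11 (κ H : ℝ) (hκ : 1 ≤ κ) (hH0 : 0 < H) (hH : H < 1 / 2) :
    (∀ v ∈ Ioc (0 : ℝ) 1, ∀ w ∈ Ioc (0 : ℝ) 1,
      IntegrableOn
        (fun r => (pplus H ((v - w) / κ + r + 2) - pplus H ((v - w) / κ + r + 1)) *
          (pplus H r - pplus H (r - 1))) (Ioi (0 : ℝ))) ∧
    (∫ v in Ioc (0 : ℝ) 1, ∫ w in Ioc (0 : ℝ) 1, ∫ r in Ioi (0 : ℝ),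
      (pplus H ((v - w) / κ + r + 2) - pplus H ((v - w) / κ + r + 1)) *
        (pplus H r - pplus H (r - 1))) < 0 :=
  stmt11_general κ H hκ (by linarith) hH

end
end
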